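/- In the infinitesimal Hecke algebra H_{z'} = U(sl₂ ⋉ ℂ²)-deformation with relations [e,x]=0, [f,x]=y, [h,x]=x, [h,y]=-y, [e,y]=x, [f,y]=0, [x,y]=z'(Δ), the element t_z = ey² + ½h(xy+yx) - fx² + z(Δ) commutes with e, f, h, x, y (for the appropriate z ∈ ℂ[Δ] determined by z'), i.e. t_z is central. -/

import Mathlib

open Polynomial

namespace HeckeAux

/-- Every polynomial is a forward difference. -/
lemma exists_diff (G : ℂ[X]) : ∃ P : ℂ[X], P.comp (X + 1) - P = G := by
  induction G using Polynomial.induction_on' with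
  | add p q hp hq =>
    obtain ⟨P, hP⟩ := hp
    obtain ⟨Q, hQ⟩ := hq
    exact ⟨P + Q, by rw [add_comp, ← hP, ← hQ]; ring⟩
  | monomial n a =>
    refine ⟨C (a / (n + 1)) * (Polynomial.bernoulli (n + 1)).map (algebraMap ℚ ℂ), ?_⟩
    have h1 : (Polynomial.bernoulli (n + 1)).comp (1 + X)
        = Polynomial.bernoulli (n + 1) + (n + 1 : ℚ[X]) * X ^ n := by
      apply Polynomial.funext
      intro r
      have := Polynomial.bernoulli_eval_one_add (n + 1) r
      simp [eval_comp, this]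
    have h2 := congrArg (Polynomial.map (algebraMap ℚ ℂ)) h1
    rw [Polynomial.map_comp] at h2
    simp only [Polynomial.map_add, Polynomial.map_one, Polynomial.map_X, Polynomial.map_mul,
      Polynomial.map_pow, Polynomial.map_natCast] at h2
    rw [mul_comp, C_comp, add_comm X 1, h2, ← C_mul_X_pow_eq_monomial]
    have h3 : (C (a / (n + 1)) : ℂ[X]) * (n + 1) = C a := by
      have : ((n : ℂ[X]) + 1) = C ((n : ℂ) + 1) := by simp
      rw [this, ← C_mul, div_mul_cancel₀]
      exact_mod_cast Nat.succ_ne_zero n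
    rw [← h3]; ring

lemma exists_even (P : ℂ[X]) : ∃ Q : ℂ[X], P + P.comp (-X) = Q.comp (X ^ 2) := by
  induction P using Polynomial.induction_on' with
  | add p q hp hq =>
    obtain ⟨P, hP⟩ := hp
    obtain ⟨Q, hQ⟩ := hq
    exact ⟨P + Q, by rw [add_comp, add_comp, ← hP, ← hQ]; ring⟩
  | monomial n a =>
    rw [← C_mul_X_pow_eq_monomial]
    rcases Nat.even_or_odd' n with ⟨k, rfl | rfl⟩
    · refine ⟨C (2 * a) * X ^ k, ?_⟩
      simp only [mul_comp, C_comp, pow_comp, X_comp, C_mul, pow_mul]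
      have h2 : (C 2 : ℂ[X]) = 2 := map_ofNat C 2
      simp only [neg_sq, h2]; ring
    · refine ⟨0, ?_⟩
      simp [pow_succ, pow_mul]

lemma exists_z (w : ℂ[X]) : ∃ z : ℂ[X],
    2 * (z.comp ((X + 1) ^ 2 - 1) - z.comp (X ^ 2 - 1))
      = X * w.comp ((X + 1) ^ 2 - 1) + (X + 1) * w.comp (X ^ 2 - 1) := by
  obtain ⟨P, hP⟩ := exists_diff (X * w.comp ((X + 1) ^ 2 - 1) + (X + 1) * w.comp (X ^ 2 - 1))
  obtain ⟨Q, hQ⟩ := exists_even P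
  refine ⟨C (1 / 4) * Q.comp (X + 1), ?_⟩
  have hP2 := congrArg (fun p => p.comp (-X - 1)) hP
  simp only [sub_comp, add_comp, mul_comp, X_comp, one_comp, comp_assoc, pow_comp] at hP2
  have e1 : (-X - 1 + 1 : ℂ[X]) = -X := by ring
  have e2 : ((-X) ^ 2 - 1 : ℂ[X]) = X ^ 2 - 1 := by ring
  have e3 : ((-X - 1) ^ 2 - 1 : ℂ[X]) = (X + 1) ^ 2 - 1 := by ring
  rw [e1, e2, e3] at hP2
  have hQ2 := congrArg (fun p => p.comp (X + 1)) hQ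
  simp only [add_comp, comp_assoc, pow_comp, X_comp, neg_comp] at hQ2
  have e4 : (-(X + 1) : ℂ[X]) = -X - 1 := by ring
  rw [e4] at hQ2
  simp only [mul_comp, C_comp, comp_assoc, add_comp, X_comp, one_comp, sub_add_cancel]
  rw [← hQ, ← hQ2]
  have h4 : (C (1 / 4) : ℂ[X]) * 4 = 1 := by
    have : (4 : ℂ[X]) = C 4 := (map_ofNat C 4).symm
    rw [this, ← C_mul]; norm_num
  linear_combination (2 * C (1 / 4)) * hP - (2 * C (1 / 4)) * hP2
    + (X * w.comp ((X + 1) ^ 2 - 1) + (X + 1) * w.comp (X ^ 2 - 1)) * h4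

section
variable {A : Type*} [Ring A] [Algebra ℂ A]

lemma commute_aeval {c g : A} (h : Commute g c) (p : ℂ[X]) : Commute g (aeval c p) := by
  induction p using Polynomial.induction_on' with
  | add p q hp hq => rw [map_add]; exact hp.add_right hq
  | monomial n a =>
    rw [aeval_monomial]
    exact (Algebra.commute_algebraMap_right a g).mul_right (h.pow_right n)

/-- The operator `a ↦ (Δ a - a Δ - a) / 2`. -/
noncomputable def S (D : A) : Module.End ℂ A :=
  (1 / 2 : ℂ) • (LinearMap.mulLeft ℂ D - LinearMap.mulRight ℂ D - 1)

lemma S_apply (D a : A) : S D a = (1 / 2 : ℂ) • (D * a - a * D - a) := by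
  simp [S]

lemma left_S (D : A) (p : ℂ[X]) (a : A) : D * aeval (S D) p a = aeval (S D) p (D * a) := by
  have h : Commute (LinearMap.mulLeft ℂ D) (S D) := by
    ext a
    simp [S_apply, mul_sub, mul_assoc]
  have h2 : Commute (LinearMap.mulLeft ℂ D) (aeval (S D) p) :=
    commute_aeval h p
  exact congrArg (fun F : Module.End ℂ A => F a) h2.eq

lemma right_S (D : A) (p : ℂ[X]) (a : A) : aeval (S D) p a * D = aeval (S D) p (a * D) := by
  have h : Commute (LinearMap.mulRight ℂ D) (S D) := by
    ext a
    simp [S_apply, sub_mul, mul_assoc]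
  have h2 : Commute (LinearMap.mulRight ℂ D) (aeval (S D) p) :=
    commute_aeval h p
  exact congrArg (fun F : Module.End ℂ A => F a) h2.eq

lemma phi_mul (D x : A) (p q : ℂ[X]) :
    aeval (S D) (p * q) x = aeval (S D) p (aeval (S D) q x) := by
  rw [map_mul]; rfl

lemma base_left (D x : A)
    (hD : D * D * x - 2 * (D * x * D) + x * D * D = 2 * (D * x + x * D) + 3 * x) :
    aeval (S D) ((X + 1) ^ 2 - 1 : ℂ[X]) x = D * x := by
  have h1 : ((X + 1) ^ 2 - 1 : ℂ[X]) = X * X + X + X := by ring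
  rw [h1, map_add, map_add, LinearMap.add_apply, LinearMap.add_apply, phi_mul]
  simp only [aeval_X, S_apply]
  have h2 : D * D * x = 2 * (D * x * D) - x * D * D + (2 * (D * x + x * D) + 3 * x) := by
    rw [← hD]; abel
  simp only [mul_smul_comm, smul_mul_assoc, mul_sub, sub_mul, ← mul_assoc]
  rw [h2]
  simp only [two_mul, (by norm_num : (3 : A) = 1 + 1 + 1), add_mul, one_mul]
  module

lemma base_right (D x : A)
    (hD : D * D * x - 2 * (D * x * D) + x * D * D = 2 * (D * x + x * D) + 3 * x) :
    aeval (S D) (X ^ 2 - 1 : ℂ[X]) x = x * D := by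
  have h1 : (X ^ 2 - 1 : ℂ[X]) = ((X + 1) ^ 2 - 1) - X - X - 1 := by ring
  rw [h1, map_sub, map_sub, map_sub, LinearMap.sub_apply, LinearMap.sub_apply,
    LinearMap.sub_apply, base_left D x hD]
  simp only [aeval_X, S_apply, map_one, Module.End.one_apply]
  module

lemma full_left (D x : A)
    (hD : D * D * x - 2 * (D * x * D) + x * D * D = 2 * (D * x + x * D) + 3 * x)
    (w p : ℂ[X]) :
    aeval D w * aeval (S D) p x = aeval (S D) (w.comp ((X + 1) ^ 2 - 1) * p) x := by
  induction w using Polynomial.induction_on generalizing p with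
  | C a =>
    rw [aeval_C, C_comp, ← Algebra.smul_def, phi_mul, aeval_C]; rfl
  | add u v hu hv => rw [map_add, add_mul, hu, hv, add_comp, add_mul, map_add]; rfl
  | monomial n a ih =>
    rw [pow_succ, ← mul_assoc, map_mul, aeval_X, mul_assoc, left_S, ← base_left D x hD,
      ← phi_mul, ih]
    congr 2
    rw [mul_comp _ X, X_comp]; ring

lemma full_right (D x : A)
    (hD : D * D * x - 2 * (D * x * D) + x * D * D = 2 * (D * x + x * D) + 3 * x)
    (w p : ℂ[X]) :
    aeval (S D) p x * aeval D w = aeval (S D) (w.comp (X ^ 2 - 1) * p) x := by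
  induction w using Polynomial.induction_on generalizing p with
  | C a =>
    rw [aeval_C, C_comp, ← Algebra.commutes, ← Algebra.smul_def, phi_mul, aeval_C]; rfl
  | add u v hu hv => rw [map_add, mul_add, hu, hv, add_comp, add_mul, map_add]; rfl
  | monomial n a ih =>
    rw [pow_succ, ← mul_assoc, mul_comm _ X, map_mul, aeval_X, ← mul_assoc, right_S,
      ← base_right D x hD, ← phi_mul, ih]
    congr 2
    rw [mul_comp X, X_comp]; ring

lemma exists_z_alg (D x : A)
    (hD : D * D * x - 2 * (D * x * D) + x * D * D = 2 * (D * x + x * D) + 3 * x)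
    (w : ℂ[X]) : ∃ z : ℂ[X],
      4 * (aeval D z * x - x * aeval D z)
        = aeval D w * (D * x - x * D) + (D * x - x * D) * aeval D w
          - (aeval D w * x - x * aeval D w) := by
  obtain ⟨z, hz⟩ := exists_z w
  refine ⟨z, ?_⟩
  have hx : aeval (S D) (1 : ℂ[X]) x = x := by simp
  have hl : ∀ u : ℂ[X], aeval D u * x = aeval (S D) (u.comp ((X + 1) ^ 2 - 1)) x := by
    intro u
    have := full_left D x hD u 1
    rwa [hx, mul_one] at this
  have hr : ∀ u : ℂ[X], x * aeval D u = aeval (S D) (u.comp (X ^ 2 - 1)) x := by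
    intro u
    have := full_right D x hD u 1
    rwa [hx, mul_one] at this
  have hd : D * x - x * D = aeval (S D) (((X + 1) ^ 2 - 1) - (X ^ 2 - 1) : ℂ[X]) x := by
    rw [map_sub, LinearMap.sub_apply, base_left D x hD, base_right D x hD]
  rw [hd, full_left D x hD, full_right D x hD, hl, hl, hr, hr]
  have h4 : ∀ a : A, 4 * a = a + a + a + a := fun a => by noncomm_ring
  rw [h4]
  simp only [← LinearMap.sub_apply, ← LinearMap.add_apply, ← map_sub (aeval (R := ℂ) (S D)),
    ← map_add (aeval (R := ℂ) (S D))]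
  congr 2
  linear_combination 2 * hz

end
end HeckeAux

theorem hecke_center {A : Type*} [Ring A] [Algebra ℂ A] (e f h x y : A) (z' : Polynomial ℂ)
    (hhe : h * e - e * h = 2 * e) (hhf : h * f - f * h = -2 * f) (hef : e * f - f * e = h)
    (hex : e * x - x * e = 0) (hfx : f * x - x * f = y) (hhx : h * x - x * h = x)
    (hhy : h * y - y * h = -y) (hey : e * y - y * e = x) (hfy : f * y - y * f = 0)
    (hxy : x * y - y * x = aeval (h ^ 2 + 4 * f * e + 2 * h) z') :
    ∃ z : Polynomial ℂ,
      ∀ g ∈ ({e, f, h, x, y} : Set A),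
        Commute (e * y ^ 2 + (1 / 2 : ℂ) • (h * (x * y + y * x)) - f * x ^ 2
          + aeval (h ^ 2 + 4 * f * e + 2 * h) z) g := by
  obtain ⟨D, hDdef⟩ : ∃ D, D = h ^ 2 + 4 * f * e + 2 * h := ⟨_, rfl⟩
  rw [← hDdef] at hxy ⊢
  have hDe : D * e - e * D = 0 := by
    rw [hDdef]
    linear_combination (norm := noncomm_ring) h * hhe + hhe * h - 4 * hef * e
  have hDf : D * f - f * D = 0 := by
    rw [hDdef]
    linear_combination (norm := noncomm_ring) h * hhf + hhf * h + 4 * f * hef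
  have hDh : D * h - h * D = 0 := by
    rw [hDdef]
    linear_combination (norm := noncomm_ring) - 4 * f * hhe - 4 * hhf * e
  have hDx : D * x - x * D = 2 * h * x + 4 * e * y - 3 * x := by
    rw [hDdef]
    linear_combination (norm := noncomm_ring) h * hhx + hhx * h + 4 * f * hex + 4 * hfx * e
      + hhx - 4 * hey
  have hDy : D * y - y * D = -2 * h * y + 4 * f * x - 3 * y := by
    rw [hDdef]
    linear_combination (norm := noncomm_ring) h * hhy + hhy * h + 4 * f * hey + 4 * hfy * e
      + 3 * hhy
  have hD : D * D * x - 2 * (D * x * D) + x * D * D = 2 * (D * x + x * D) + 3 * x := by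
    linear_combination (norm := noncomm_ring) D * hDx - hDx * D + 2 * hDh * x + 4 * hDe * y
      + 2 * h * hDx + 4 * e * hDy - hDx + 8 * hhe * y + 16 * hef * x - 4 * hDdef * x
  obtain ⟨z, hz⟩ := HeckeAux.exists_z_alg D x hD z'
  have comm : ∀ (g : A), D * g - g * D = 0 → ∀ p : ℂ[X], aeval D p * g - g * aeval D p = 0 := by
    intro g hg p
    exact sub_eq_zero.2
      (HeckeAux.commute_aeval (show Commute g D from (sub_eq_zero.1 hg).symm) p).eq.symm
  have hwe := comm e hDe z'
  have hwh := comm h hDh z'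
  generalize aeval D z' = w at *
  obtain ⟨T, hT⟩ : ∃ T, T = 2 * e * y ^ 2 + h * (x * y + y * x) - 2 * f * x ^ 2 := ⟨_, rfl⟩
  have hTe : e * T - T * e = 0 := by
    rw [hT]
    linear_combination (norm := noncomm_ring) 2 * e * (hey * y) + 2 * e * (y * hey)
      - hhe * (x * y + y * x) + h * (hex * y) + h * (x * hey) + h * (hey * x) + h * (y * hex)
      - 2 * hef * x ^ 2 - 2 * f * (hex * x) - 2 * f * (x * hex)
  have hTf : f * T - T * f = 0 := by
    rw [hT]
    linear_combination (norm := noncomm_ring) - 2 * hef * y ^ 2 + 2 * e * (hfy * y)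
      + 2 * e * (y * hfy)
      - hhf * (x * y + y * x) + h * (hfx * y) + h * (x * hfy) + h * (hfy * x) + h * (y * hfx)
      - 2 * f * (hfx * x) - 2 * f * (x * hfx)
  have hTh : h * T - T * h = 0 := by
    rw [hT]
    linear_combination (norm := noncomm_ring) 2 * hhe * y ^ 2 + 2 * e * (hhy * y)
      + 2 * e * (y * hhy)
      + h * (hhx * y) + h * (x * hhy) + h * (hhy * x) + h * (y * hhx)
      - 2 * hhf * x ^ 2 - 2 * f * (hhx * x) - 2 * f * (x * hhx)
  have hTx : x * T - T * x = 2 * e * (w * y + y * w) + h * (x * w + w * x) - 2 * w * x - x * w := by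
    rw [hT]
    linear_combination (norm := noncomm_ring) - 2 * hex * y ^ 2 + 2 * e * (hxy * y)
      + 2 * e * (y * hxy) - hhx * (x * y + y * x) + h * (x * hxy) + h * (hxy * x)
      + 2 * hfx * x ^ 2 - 2 * hxy * x - x * hxy
  have hTx2 : 2 * (x * T - T * x) = 4 * (aeval D z * x - x * aeval D z) := by
    linear_combination (norm := noncomm_ring) 2 * hTx - hz - w * hDx - hDx * w
      - 2 * hwh * x - 4 * hwe * y
  have key : e * y ^ 2 + (1 / 2 : ℂ) • (h * (x * y + y * x)) - f * x ^ 2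
      = (1 / 2 : ℂ) • T := by
    rw [hT]
    simp only [two_mul, add_mul]
    module
  rw [key]
  have fin : ∀ g : A, g * T - T * g = 0 → D * g - g * D = 0 →
      Commute ((1 / 2 : ℂ) • T + aeval D z) g := by
    intro g h1 h2
    have c1 : Commute T g := (sub_eq_zero.1 h1).symm
    exact (c1.smul_left _).add_left (sub_eq_zero.1 (comm g h2 z))
  have Ce := fin e hTe hDe
  have Cf := fin f hTf hDf
  have Ch := fin h hTh hDh
  have Cx : Commute ((1 / 2 : ℂ) • T + aeval D z) x := by
    have h2 : ((1 / 2 : ℂ) • T + aeval D z) * x - x * ((1 / 2 : ℂ) • T + aeval D z)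
        = (-1 / 4 : ℂ) • (2 * (x * T - T * x) - 4 * (aeval D z * x - x * aeval D z)) := by
      have h4 : ∀ a : A, 4 * a = a + a + a + a := fun a => by noncomm_ring
      simp only [two_mul, h4, add_mul, mul_add, smul_mul_assoc, mul_smul_comm]
      module
    rw [hTx2, sub_self, smul_zero] at h2
    exact sub_eq_zero.1 h2
  have Cy : Commute ((1 / 2 : ℂ) • T + aeval D z) y := by
    rw [← hfx]
    exact (Cf.mul_right Cx).sub_right (Cx.mul_right Cf)
  refine ⟨z, ?_⟩
  rintro g (rfl | rfl | rfl | rfl | rfl)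
  exacts [Ce, Cf, Ch, Cx, Cy]
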